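/- (Lower bound for embedding diamond graphs into ℓ_p, p ≥ 2.) For every real p ≥ 2, every k ≥ 1, and every map f from the vertex set of 𝒟_k to ℓ_p and every ρ ≥ 1 such that d(x,y) ≤ ‖f(x) − f(y)‖_p ≤ ρ·d(x,y) for all vertices x, y of 𝒟_k, one has ρ ≥ ((k+1)/2^{p−2})^{1/p}. In particular, every embedding of 𝒟_k into ℓ_p has distortion Ω(k^{1/p}). -/

import Mathlib

/-- Index type for the edges of the diamond graph `𝒟_k`: each edge of `𝒟_k`
is replaced by four edges in `𝒟_{k+1}`. -/
def DEdge : ℕ → Type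
  | 0 => Unit
  | k + 1 => DEdge k × Fin 4

/-- Vertices of the diamond graph `𝒟_k`: `𝒟_0` has two vertices `s, t`; `𝒟_{k+1}`
has the vertices of `𝒟_k` together with two new vertices (a level-`(k+1)` diagonal)
for each edge of `𝒟_k`. -/
def DVert : ℕ → Type
  | 0 => Fin 2
  | k + 1 => DVert k ⊕ (DEdge k × Bool)

/-- Endpoints of each edge of `𝒟_k`: the edge `{x,y}` of `𝒟_k` is replaced in `𝒟_{k+1}`
by the four edges `{x,a}, {a,y}, {y,b}, {b,x}` where `{a,b}` is the new diagonal. -/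
def ends : (k : ℕ) → DEdge k → DVert k × DVert k
  | 0, _ => ((0 : Fin 2), (1 : Fin 2))
  | k + 1, p =>
      ![((Sum.inl (ends k p.1).1 : DVert (k + 1)), (Sum.inr (p.1, false) : DVert (k + 1))),
        ((Sum.inr (p.1, false) : DVert (k + 1)), (Sum.inl (ends k p.1).2 : DVert (k + 1))),
        ((Sum.inl (ends k p.1).2 : DVert (k + 1)), (Sum.inr (p.1, true) : DVert (k + 1))),
        ((Sum.inr (p.1, true) : DVert (k + 1)), (Sum.inl (ends k p.1).1 : DVert (k + 1)))] p.2

instance instFintypeDEdge : ∀ k, Fintype (DEdge k)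
  | 0 => inferInstanceAs (Fintype Unit)
  | k + 1 => letI := instFintypeDEdge k; inferInstanceAs (Fintype (DEdge k × Fin 4))

instance instFintypeDVert : ∀ k, Fintype (DVert k)
  | 0 => inferInstanceAs (Fintype (Fin 2))
  | k + 1 =>
      letI := instFintypeDVert k; letI := instFintypeDEdge k
      inferInstanceAs (Fintype (DVert k ⊕ (DEdge k × Bool)))

/-- The inclusion of the vertices of `𝒟_i` into the vertices of `𝒟_{i+m}`. -/
def liftAdd : (i m : ℕ) → DVert i → DVert (i + m)
  | _, 0, v => v
  | i, m + 1, v => Sum.inl (liftAdd i m v)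

/-- The inclusion of the vertices of `𝒟_i` into the vertices of `𝒟_k` for `i ≤ k`. -/
def liftLE {i k : ℕ} (h : i ≤ k) (v : DVert i) : DVert k :=
  cast (congrArg DVert (Nat.add_sub_cancel' h)) (liftAdd i (k - i) v)

/-- The diamond graph `𝒟_k` as a simple graph on `DVert k`. -/
def diamondGraph (k : ℕ) : SimpleGraph (DVert k) :=
  SimpleGraph.fromRel (fun x y => ∃ e : DEdge k, ends k e = (x, y))

/-- The vertex `s` of `𝒟_0`. -/
def dS : DVert 0 := (0 : Fin 2)

/-- The vertex `t` of `𝒟_0`. -/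
def dT : DVert 0 := (1 : Fin 2)

/-- The first vertex of the level-`(j+1)` diagonal created from the edge `e` of `𝒟_j`,
viewed in `𝒟_k` (for `j + 1 ≤ k`). -/
def diag₁ {j k : ℕ} (h : j + 1 ≤ k) (e : DEdge j) : DVert k :=
  liftLE h (Sum.inr (e, false) : DVert (j + 1))

/-- The second vertex of the level-`(j+1)` diagonal created from the edge `e` of `𝒟_j`,
viewed in `𝒟_k` (for `j + 1 ≤ k`). -/
def diag₂ {j k : ℕ} (h : j + 1 ≤ k) (e : DEdge j) : DVert k :=
  liftLE h (Sum.inr (e, true) : DVert (j + 1))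

/-!
Equip `𝒟_k` with the energy `E(f) = ∑_{xy} ‖f x - f y‖ ^ p`, summed over the edges. In `ℓ_p`,
`p ≥ 2`, every quadrilateral satisfies the short diagonals inequality
`‖a - c‖ ^ p + ‖b - d‖ ^ p ≤ 2 ^ (p - 2) * (‖a - b‖ ^ p + ‖b - c‖ ^ p + ‖c - d‖ ^ p + ‖d - a‖ ^ p)`:
it holds in inner product spaces by the parallelogram law, and passes to `ℓ_p` sums coordinatewise.
Applied to each square of `𝒟_{k+1}`, it bounds the energy of `f` from below by that of its
restriction to `𝒟_k`, where distances have doubled, plus the contribution of the `4 ^ k` new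
diagonals. For a noncontracting map, the resulting lower bound on the mean energy per edge thus
grows by one with each level, up to `k + 1`, while a `ρ`-Lipschitz map has mean energy at most
`ρ ^ p`.
-/

open Finset

section ShortDiagonals

/-- The short diagonals inequality with exponent `p`, a nonlinear form of the parallelogram law.
The constant is sharp: on the real line equality holds if `b = d` is the midpoint of `a` and `c`. -/
def HasShortDiagonals (X : Type*) [PseudoMetricSpace X] (p : ℝ) : Prop :=
  ∀ a b c d : X, dist a c ^ p + dist b d ^ p ≤
    2 ^ (p - 2) * (dist a b ^ p + dist b c ^ p + dist c d ^ p + dist d a ^ p)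

lemma rpow_add_le_two_rpow_mul_rpow_add_rpow {x y q : ℝ} (hx : 0 ≤ x) (hy : 0 ≤ y) (hq : 1 ≤ q) :
    (x + y) ^ q ≤ 2 ^ (q - 1) * (x ^ q + y ^ q) := by
  lift x to NNReal using hx
  lift y to NNReal using hy
  exact_mod_cast NNReal.rpow_add_le_mul_rpow_add_rpow x y hq

lemma norm_sub_rpow_le {E : Type*} [SeminormedAddCommGroup E] {p : ℝ} (hp : 1 ≤ p) (a b : E) :
    ‖a - b‖ ^ p ≤ 2 ^ (p - 1) * (‖a‖ ^ p + ‖b‖ ^ p) :=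
  (Real.rpow_le_rpow (norm_nonneg _) (norm_sub_le a b) (by linarith)).trans
    (rpow_add_le_two_rpow_mul_rpow_add_rpow (norm_nonneg a) (norm_nonneg b) hp)

lemma clarkson_of_innerProductSpace (𝕜 : Type*) {E : Type*} [RCLike 𝕜] [SeminormedAddCommGroup E]
    [InnerProductSpace 𝕜 E] {p : ℝ} (hp : 2 ≤ p) (a b : E) :
    2 * (‖a‖ ^ p + ‖b‖ ^ p) ≤ ‖a + b‖ ^ p + ‖a - b‖ ^ p := by
  have hq : 1 ≤ p / 2 := by linarith
  have rpow_eq (x : E) : ‖x‖ ^ p = (‖x‖ ^ 2) ^ (p / 2) := by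
    rw [← Real.rpow_natCast_mul (norm_nonneg x)]
    congr 1
    push_cast
    ring
  simp only [rpow_eq]
  refine le_of_mul_le_mul_left ?_ (by positivity : (0 : ℝ) < 2 ^ (p / 2 - 1))
  calc 2 ^ (p / 2 - 1) * (2 * ((‖a‖ ^ 2) ^ (p / 2) + (‖b‖ ^ 2) ^ (p / 2)))
      = 2 ^ (p / 2) * ((‖a‖ ^ 2) ^ (p / 2) + (‖b‖ ^ 2) ^ (p / 2)) := by
        rw [Real.rpow_sub_one two_ne_zero]
        ring
    _ ≤ 2 ^ (p / 2) * (‖a‖ ^ 2 + ‖b‖ ^ 2) ^ (p / 2) := by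
        gcongr
        exact Real.add_rpow_le_rpow_add (sq_nonneg _) (sq_nonneg _) hq
    _ = (‖a + b‖ ^ 2 + ‖a - b‖ ^ 2) ^ (p / 2) := by
        rw [parallelogram_law_with_norm 𝕜, Real.mul_rpow (by positivity) (by positivity)]
    _ ≤ 2 ^ (p / 2 - 1) * ((‖a + b‖ ^ 2) ^ (p / 2) + (‖a - b‖ ^ 2) ^ (p / 2)) :=
        rpow_add_le_two_rpow_mul_rpow_add_rpow (sq_nonneg _) (sq_nonneg _) hq

theorem hasShortDiagonals_of_innerProductSpace (𝕜 : Type*) {E : Type*} [RCLike 𝕜]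
    [SeminormedAddCommGroup E] [InnerProductSpace 𝕜 E] {p : ℝ} (hp : 2 ≤ p) :
    HasShortDiagonals E p := by
  intro a b c d
  simp only [dist_eq_norm]
  have clarkson := clarkson_of_innerProductSpace 𝕜 hp (a - c) (b - d)
  rw [show a - c + (b - d) = (b - c) - (d - a) by abel,
    show a - c - (b - d) = (a - b) - (c - d) by abel] at clarkson
  have bound_ab_cd := norm_sub_rpow_le (by linarith : 1 ≤ p) (a - b) (c - d)
  have bound_bc_da := norm_sub_rpow_le (by linarith : 1 ≤ p) (b - c) (d - a)
  have two_rpow : (2 : ℝ) ^ (p - 1) = 2 ^ (p - 2) * 2 := by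
    rw [← Real.rpow_add_one two_ne_zero]
    ring_nf
  rw [two_rpow] at bound_ab_cd bound_bc_da
  linarith

theorem hasShortDiagonals_lp {ι : Type*} {E : ι → Type*} [∀ i, NormedAddCommGroup (E i)]
    {p : ENNReal} [Fact (1 ≤ p)] (hp : p ≠ ⊤) (hE : ∀ i, HasShortDiagonals (E i) p.toReal) :
    HasShortDiagonals (lp E p) p.toReal := by
  intro a b c d
  have hp₀ : 0 < p.toReal := ENNReal.toReal_pos (zero_lt_one.trans_le Fact.out).ne' hp
  have hasSum_dist (x y : lp E p) :
      HasSum (fun i => dist (x i) (y i) ^ p.toReal) (dist x y ^ p.toReal) := by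
    simpa only [dist_eq_norm, lp.coeFn_sub, Pi.sub_apply] using lp.hasSum_norm hp₀ (x - y)
  exact hasSum_le (fun i => hE i (a i) (b i) (c i) (d i))
    ((hasSum_dist a c).add (hasSum_dist b d))
    (((((hasSum_dist a b).add (hasSum_dist b c)).add (hasSum_dist c d)).add
      (hasSum_dist d a)).mul_left _)

end ShortDiagonals

section Adjacency

variable {k : ℕ}

/-- The inclusion of the vertices of `𝒟_k` into those of `𝒟_{k+1}`. -/
def oldVert (v : DVert k) : DVert (k + 1) := Sum.inl v

/-- The endpoints of the level-`(k+1)` diagonal created from the edge `e` of `𝒟_k`, indexed by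
`Bool`. -/
def newVert (e : DEdge k) (b : Bool) : DVert (k + 1) := Sum.inr (e, b)

lemma oldVert_injective : Function.Injective (oldVert (k := k)) := Sum.inl_injective

lemma newVert_inj {e e' : DEdge k} {b b' : Bool} :
    newVert e b = newVert e' b' ↔ e = e' ∧ b = b' :=
  Sum.inr_injective.eq_iff.trans Prod.mk_inj

lemma oldVert_ne_newVert (x : DVert k) (e : DEdge k) (b : Bool) : oldVert x ≠ newVert e b :=
  Sum.inl_ne_inr

lemma exists_ends_succ_eq (e : DEdge k) (i : Fin 4) :
    ∃ x b, (x = (ends k e).1 ∨ x = (ends k e).2) ∧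
      (ends (k + 1) (e, i) = (oldVert x, newVert e b) ∨
        ends (k + 1) (e, i) = (newVert e b, oldVert x)) := by
  fin_cases i
  · exact ⟨_, false, Or.inl rfl, Or.inl rfl⟩
  · exact ⟨_, false, Or.inr rfl, Or.inr rfl⟩
  · exact ⟨_, true, Or.inr rfl, Or.inl rfl⟩
  · exact ⟨_, true, Or.inl rfl, Or.inr rfl⟩

lemma ends_fst_ne_snd : ∀ {k : ℕ} (e : DEdge k), (ends k e).1 ≠ (ends k e).2
  | 0, _ => Fin.zero_ne_one
  | _ + 1, (_, 0) => Sum.inl_ne_inr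
  | _ + 1, (_, 1) => Sum.inr_ne_inl
  | _ + 1, (_, 2) => Sum.inl_ne_inr
  | _ + 1, (_, 3) => Sum.inr_ne_inl

lemma diamondGraph_adj_iff {x y : DVert k} :
    (diamondGraph k).Adj x y ↔ ∃ e, ends k e = (x, y) ∨ ends k e = (y, x) := by
  rw [diamondGraph, SimpleGraph.fromRel_adj, ← exists_or, and_iff_right_iff_imp]
  rintro ⟨e, he | he⟩ rfl <;> exact ends_fst_ne_snd e (by rw [he])

lemma diamondGraph_adj_ends (e : DEdge k) : (diamondGraph k).Adj (ends k e).1 (ends k e).2 :=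
  diamondGraph_adj_iff.2 ⟨e, Or.inl rfl⟩

lemma not_diamondGraph_adj_oldVert_oldVert (x y : DVert k) :
    ¬(diamondGraph (k + 1)).Adj (oldVert x) (oldVert y) := by
  rw [diamondGraph_adj_iff]
  rintro ⟨⟨e, i⟩, h⟩
  obtain ⟨_, _, -, he⟩ := exists_ends_succ_eq e i
  grind [oldVert_ne_newVert]

lemma not_diamondGraph_adj_newVert_newVert (e e' : DEdge k) (b b' : Bool) :
    ¬(diamondGraph (k + 1)).Adj (newVert e b) (newVert e' b') := by
  rw [diamondGraph_adj_iff]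
  rintro ⟨⟨e, i⟩, h⟩
  obtain ⟨_, _, -, he⟩ := exists_ends_succ_eq e i
  grind [oldVert_ne_newVert]

lemma diamondGraph_adj_oldVert_newVert_iff {x : DVert k} {e : DEdge k} {b : Bool} :
    (diamondGraph (k + 1)).Adj (oldVert x) (newVert e b) ↔
      x = (ends k e).1 ∨ x = (ends k e).2 := by
  rw [diamondGraph_adj_iff]
  constructor
  · rintro ⟨⟨e', i⟩, h⟩
    obtain ⟨_, _, hx, he⟩ := exists_ends_succ_eq e' i
    grind [oldVert_injective.eq_iff, newVert_inj, oldVert_ne_newVert]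
  · rintro (rfl | rfl) <;> cases b
    · exact ⟨(e, 0), Or.inl rfl⟩
    · exact ⟨(e, 3), Or.inr rfl⟩
    · exact ⟨(e, 1), Or.inr rfl⟩
    · exact ⟨(e, 2), Or.inl rfl⟩

end Adjacency

section Distance

variable {k : ℕ}

lemma le_add_dist_of_forall_adj {V : Type*} {G : SimpleGraph V} {φ : V → ℕ}
    (hφ : ∀ u v, G.Adj u v → φ u ≤ φ v + 1) {u v : V} (huv : G.Reachable u v) :
    φ u ≤ φ v + G.dist u v := by
  obtain ⟨w, hw⟩ := huv.exists_walk_length_eq_dist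
  have le_add_length {a b : V} (w : G.Walk a b) : φ a ≤ φ b + w.length := by
    induction w with
    | nil => simp
    | cons hadj _ ih =>
      have := hφ _ _ hadj
      rw [SimpleGraph.Walk.length_cons]
      lia
  exact hw ▸ le_add_length w

lemma reachable_oldVert {x y : DVert k} (h : (diamondGraph k).Reachable x y) :
    (diamondGraph (k + 1)).Reachable (oldVert x) (oldVert y) := by
  have reachable_ends (e : DEdge k) :
      (diamondGraph (k + 1)).Reachable (oldVert (ends k e).1) (oldVert (ends k e).2) :=
    (diamondGraph_adj_oldVert_newVert_iff (b := false).2 (Or.inl rfl)).reachable.trans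
      (diamondGraph_adj_oldVert_newVert_iff.2 (Or.inr rfl)).symm.reachable
  obtain ⟨w⟩ := h
  induction w with
  | nil => exact SimpleGraph.Reachable.rfl
  | cons hadj _ ih =>
    obtain ⟨e, he | he⟩ := diamondGraph_adj_iff.1 hadj
    · exact SimpleGraph.Reachable.trans (by simpa only [he] using reachable_ends e) ih
    · exact SimpleGraph.Reachable.trans (by simpa only [he] using (reachable_ends e).symm) ih

/-- The distance in `𝒟_{k+1}` to an old vertex `y`, expressed through distances in `𝒟_k`. It serves
as a `1`-Lipschitz potential bounding distances in `𝒟_{k+1}` from below. -/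
noncomputable def distPotential (y : DVert k) : DVert (k + 1) → ℕ
  | Sum.inl x => 2 * (diamondGraph k).dist y x
  | Sum.inr (e, _) =>
    2 * min ((diamondGraph k).dist y (ends k e).1) ((diamondGraph k).dist y (ends k e).2) + 1

lemma distPotential_oldVert (y x : DVert k) :
    distPotential y (oldVert x) = 2 * (diamondGraph k).dist y x :=
  rfl

lemma distPotential_le_of_adj (y : DVert k) (u v : DVert (k + 1))
    (h : (diamondGraph (k + 1)).Adj u v) : distPotential y u ≤ distPotential y v + 1 := by
  rcases u with x | ⟨e, b⟩ <;> rcases v with x' | ⟨e', b'⟩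
  · exact absurd h (not_diamondGraph_adj_oldVert_oldVert x x')
  · have hdist := (diamondGraph_adj_ends e').diff_dist_adj (u := y)
    have hx := diamondGraph_adj_oldVert_newVert_iff.1 h
    simp only [distPotential]
    grind
  · have hx := diamondGraph_adj_oldVert_newVert_iff.1 h.symm
    simp only [distPotential]
    grind
  · exact absurd h (not_diamondGraph_adj_newVert_newVert e e' b b')

lemma two_mul_dist_le_dist_oldVert (x y : DVert k) :
    2 * (diamondGraph k).dist x y ≤ (diamondGraph (k + 1)).dist (oldVert x) (oldVert y) := by
  by_cases hxy : (diamondGraph k).Reachable x y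
  · have h := le_add_dist_of_forall_adj (distPotential_le_of_adj y) (reachable_oldVert hxy)
    simpa [distPotential_oldVert, SimpleGraph.dist_comm] using h
  · simp [SimpleGraph.dist_eq_zero_of_not_reachable hxy]

lemma two_le_dist_newVert (e : DEdge k) :
    2 ≤ (diamondGraph (k + 1)).dist (newVert e false) (newVert e true) := by
  have adj_fst (b : Bool) : (diamondGraph (k + 1)).Adj (oldVert (ends k e).1) (newVert e b) :=
    diamondGraph_adj_oldVert_newVert_iff.2 (Or.inl rfl)
  have reachable := (adj_fst false).symm.reachable.trans (adj_fst true).reachable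
  exact reachable.one_lt_dist_of_ne_of_not_adj (by simp [newVert_inj])
    (not_diamondGraph_adj_newVert_newVert e e false true)

end Distance

section Energy

variable {X : Type*} [PseudoMetricSpace X] {p : ℝ} {k : ℕ}

lemma card_dEdge : ∀ k, Fintype.card (DEdge k) = 4 ^ k
  | 0 => rfl
  | k + 1 => by
    rw [show Fintype.card (DEdge (k + 1)) = Fintype.card (DEdge k × Fin 4) from rfl,
      Fintype.card_prod, card_dEdge k, Fintype.card_fin, pow_succ]

/-- The `p`-energy of a map on `𝒟_k`: the sum of the `p`-th powers of the lengths of the images of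
the edges. -/
noncomputable def edgeEnergy (p : ℝ) (f : DVert k → X) : ℝ :=
  ∑ e, dist (f (ends k e).1) (f (ends k e).2) ^ p

lemma edgeEnergy_zero (f : DVert 0 → X) : edgeEnergy p f = dist (f dS) (f dT) ^ p :=
  Fintype.sum_unique (ι := Unit) _

lemma edgeEnergy_succ (f : DVert (k + 1) → X) :
    edgeEnergy p f = ∑ e : DEdge k,
      (dist (f (oldVert (ends k e).1)) (f (newVert e false)) ^ p +
        dist (f (newVert e false)) (f (oldVert (ends k e).2)) ^ p +
        dist (f (oldVert (ends k e).2)) (f (newVert e true)) ^ p +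
        dist (f (newVert e true)) (f (oldVert (ends k e).1)) ^ p) :=
  (Fintype.sum_prod_type (α₁ := DEdge k) (α₂ := Fin 4) _).trans
    (sum_congr rfl fun _ _ => Fin.sum_univ_four _)

lemma edgeEnergy_le (hp : 0 ≤ p) {f : DVert k → X} {L : ℝ}
    (hf : ∀ e, dist (f (ends k e).1) (f (ends k e).2) ≤ L) : edgeEnergy p f ≤ 4 ^ k * L ^ p := by
  calc edgeEnergy p f ≤ ∑ _e : DEdge k, L ^ p :=
        sum_le_sum fun e _ => Real.rpow_le_rpow dist_nonneg (hf e) hp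
    _ = 4 ^ k * L ^ p := by simp [card_dEdge]

lemma HasShortDiagonals.edgeEnergy_oldVert_add_le (hX : HasShortDiagonals X p)
    (f : DVert (k + 1) → X) :
    edgeEnergy p (fun v => f (oldVert v)) +
        ∑ e : DEdge k, dist (f (newVert e false)) (f (newVert e true)) ^ p ≤
      2 ^ (p - 2) * edgeEnergy p f := by
  rw [edgeEnergy_succ, edgeEnergy, ← sum_add_distrib, mul_sum]
  exact sum_le_sum fun e _ => hX _ _ _ _

theorem HasShortDiagonals.le_edgeEnergy (hX : HasShortDiagonals X p) (hp : 0 ≤ p) {f : DVert k → X}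
    {r : ℝ} (hr : 0 ≤ r) (hf : ∀ x y, r * (diamondGraph k).dist x y ≤ dist (f x) (f y)) :
    (k + 1) * 4 ^ k * r ^ p ≤ edgeEnergy p f := by
  induction k generalizing r with
  | zero =>
    have dist_eq : (diamondGraph 0).dist dS dT = 1 :=
      SimpleGraph.dist_eq_one_iff_adj.2 (diamondGraph_adj_ends (k := 0) ())
    have hST := hf dS dT
    rw [dist_eq, Nat.cast_one, mul_one] at hST
    simpa [edgeEnergy_zero] using Real.rpow_le_rpow hr hST hp
  | succ k ih =>
    have old_le : (k + 1) * 4 ^ k * (r * 2) ^ p ≤ edgeEnergy p (fun v => f (oldVert v)) := by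
      refine ih (by positivity) fun x y => le_trans ?_ (hf (oldVert x) (oldVert y))
      rw [mul_assoc]
      gcongr
      exact_mod_cast two_mul_dist_le_dist_oldVert x y
    have new_le (e : DEdge k) : r * 2 ≤ dist (f (newVert e false)) (f (newVert e true)) := by
      refine le_trans ?_ (hf (newVert e false) (newVert e true))
      gcongr
      exact_mod_cast two_le_dist_newVert e
    have two_mul_rpow : (r * 2) ^ p = 2 ^ (p - 2) * (4 * r ^ p) := by
      rw [Real.mul_rpow hr zero_le_two, Real.rpow_sub two_pos, Real.rpow_two]
      ring
    refine le_of_mul_le_mul_left ?_ (by positivity : (0 : ℝ) < 2 ^ (p - 2))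
    calc 2 ^ (p - 2) * (((k + 1 : ℕ) + 1) * 4 ^ (k + 1) * r ^ p)
        = (k + 1) * 4 ^ k * (r * 2) ^ p + ∑ _e : DEdge k, (r * 2) ^ p := by
          rw [sum_const, card_univ, card_dEdge, nsmul_eq_mul, two_mul_rpow]
          push_cast
          ring
      _ ≤ edgeEnergy p (fun v => f (oldVert v)) +
            ∑ e : DEdge k, dist (f (newVert e false)) (f (newVert e true)) ^ p := by
          gcongr with e
          exact new_le e
      _ ≤ 2 ^ (p - 2) * edgeEnergy p f := hX.edgeEnergy_oldVert_add_le f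

end Energy

theorem diamond_lower_bound_general {X : Type*} [PseudoMetricSpace X] {p : ℝ} (hp : 0 < p)
    (hX : HasShortDiagonals X p) {k : ℕ} {f : DVert k → X} {r ρ : ℝ} (hr : 0 < r)
    (hlow : ∀ x y, r * (diamondGraph k).dist x y ≤ dist (f x) (f y))
    (hup : ∀ x y, dist (f x) (f y) ≤ ρ * (r * (diamondGraph k).dist x y)) :
    ((k : ℝ) + 1) ^ (1 / p) ≤ ρ := by
  have dist_ends (e : DEdge k) : (diamondGraph k).dist (ends k e).1 (ends k e).2 = 1 :=
    SimpleGraph.dist_eq_one_iff_adj.2 (diamondGraph_adj_ends e)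
  have edge_le (e : DEdge k) : dist (f (ends k e).1) (f (ends k e).2) ≤ ρ * r := by
    simpa [dist_ends] using hup (ends k e).1 (ends k e).2
  obtain ⟨e⟩ : Nonempty (DEdge k) := Fintype.card_pos_iff.1 (by simp [card_dEdge])
  have hρ : 0 ≤ ρ := nonneg_of_mul_nonneg_left (dist_nonneg.trans (edge_le e)) hr
  have energy_le : (k + 1) * 4 ^ k * r ^ p ≤ 4 ^ k * (ρ * r) ^ p :=
    (hX.le_edgeEnergy hp.le hr.le hlow).trans (edgeEnergy_le hp.le edge_le)
  rw [Real.mul_rpow hρ hr.le] at energy_le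
  rw [one_div, Real.rpow_inv_le_iff_of_pos (by positivity) hρ hp]
  refine le_of_mul_le_mul_right ?_ (by positivity : 0 < 4 ^ k * r ^ p)
  linarith

/-- Lower bound for embedding the diamond graph `𝒟_k` into `ℓ_p`, `p ≥ 2`: every
non-contractive embedding with expansion `ρ` satisfies `ρ ≥ ((k+1)/2^{p-2})^{1/p}`;
in particular every embedding of `𝒟_k` into `ℓ_p` has distortion `Ω(k^{1/p})`. -/
theorem diamond_lower_bound (p : ℝ) (hp : 2 ≤ p) (k : ℕ) (hk : 1 ≤ k)
    (f : DVert k → lp (fun _ : ℕ => ℝ) (ENNReal.ofReal p)) (ρ : ℝ) (hρ : 1 ≤ ρ)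
    (hlow : ∀ x y : DVert k, ((diamondGraph k).dist x y : ℝ) ≤ ‖f x - f y‖)
    (hup : ∀ x y : DVert k, ‖f x - f y‖ ≤ ρ * ((diamondGraph k).dist x y : ℝ)) :
    (((k : ℝ) + 1) / 2 ^ (p - 2)) ^ (1 / p) ≤ ρ := by
  have hp₀ : 0 < p := by linarith
  have : Fact (1 ≤ ENNReal.ofReal p) := ⟨ENNReal.one_le_ofReal.2 (by linarith)⟩
  have toReal_ofReal : (ENNReal.ofReal p).toReal = p := ENNReal.toReal_ofReal hp₀.le
  have short_diagonals : HasShortDiagonals (lp (fun _ : ℕ => ℝ) (ENNReal.ofReal p)) p := by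
    have := hasShortDiagonals_lp (E := fun _ : ℕ => ℝ) ENNReal.ofReal_ne_top fun _ =>
      hasShortDiagonals_of_innerProductSpace ℝ (toReal_ofReal.symm ▸ hp)
    rwa [toReal_ofReal] at this
  calc (((k : ℝ) + 1) / 2 ^ (p - 2)) ^ (1 / p)
      ≤ ((k : ℝ) + 1) ^ (1 / p) := by
        gcongr
        exact div_le_self (by positivity) (Real.one_le_rpow one_le_two (by linarith))
    _ ≤ ρ := diamond_lower_bound_general hp₀ short_diagonals one_pos
        (by simpa only [one_mul, dist_eq_norm] using hlow)
        (by simpa only [one_mul, dist_eq_norm] using hup)
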